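/- arXiv:2207.10419 — 2 statements merged into one kernel-verified Lean document; each statement's English description precedes it below -/
import Mathlib

section
/- Let s > 0 be a real number with ζ(1/2 + is) = 0, let k be a positive integer, let L = 2πk/s and μ = e^L. Then for every f ∈ S₀^ev one has ∫_1^μ (Σ_μ(ℰf))(u) u^{−is} d*u = 0. Consequently, the character u ↦ u^{is}, which is a nonzero element of L² of the circle ℝ₊*/μ^ℤ (identified with L²(ℝ/Lℤ) via u = e^t), is orthogonal to every Σ_μ(ℰf), so the closure of {Σ_μ(ℰf) : f ∈ S₀^ev} in L²(ℝ₊*/μ^ℤ) is a proper subspace; that is, the circle of length L is a ζ-cycle. -/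
/-!
Write `F(u) = ∑_{n ≥ 1} f(n u)` (`dilSum`), so that `ℰ f (u) = u^{1/2} F(u)`. Because `L s = 2πk`,
the character `u ↦ u^{-is}` is `μ`-periodic, so unfolding the sum over `μ^ℤ` (`integral_unfold`)
turns the integral over `(1, μ]` into the integral over `(0, ∞)` of `ℰ f (u) u^{-is} du/u`, which is
the Mellin transform of `F` at `1/2 - is`.

For `Re z > 1` the Mellin transform of `F` is `ζ(z)` times that of `f`, by termwise integration.
Poisson summation together with `f 0 = 0` and `∫ f = 0` gives `F(u) = O(u)` at `0`
(`dilSum_near_zero`), so the Mellin transform of `F` is holomorphic on `Re z > 0` and the identity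
continues to `z = 1/2 - is` (`mellin_dilSum`). There `ζ` vanishes by the functional equation.

The conclusion says that the class of `u ↦ u^{is}` in `L²` is orthogonal to every `Σ_μ (ℰ f)`. Its
orthogonal complement is closed, so density of these functions would make the class zero, whereas
`|u^{is}| = 1` and the measure is nonzero.
-/

open MeasureTheory Set

/-- `(ℰ f)(u) = u^{1/2} ∑_{n ≥ 1} f(n u)`. -/
noncomputable def Emap (f : ℝ → ℂ) (u : ℝ) : ℂ :=
  (u : ℂ) ^ ((1 : ℂ)/2) * ∑' n : ℕ, f ((n + 1) * u)

/-- `(Σ_μ g)(u) = ∑_{k ∈ ℤ} g(μ^k u)`. -/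
noncomputable def SigmaMu (μ : ℝ) (g : ℝ → ℂ) (u : ℝ) : ℂ :=
  ∑' k : ℤ, g (μ ^ k * u)

/-- The multiplicative Haar measure `du/u` on the fundamental domain `(1, μ]` of
`ℝ₊*/μ^ℤ`; `L²` of this measure is `L²` of the circle of length `log μ`. -/
noncomputable def circleMeasure (μ : ℝ) : Measure ℝ :=
  (volume.withDensity fun u : ℝ => ENNReal.ofReal u⁻¹).restrict (Ioc 1 μ)

open Filter Topology Asymptotics
open scoped FourierTransform

/-! ### Growth of the dilation sum -/

/-- `∑_{n ≥ 1} f(n u)`, the series in `Emap` without the factor `u^{1/2}`. -/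
noncomputable def dilSum (f : ℝ → ℂ) (u : ℝ) : ℂ := ∑' n : ℕ, f ((n + 1) * u)

lemma schwartz_bound (f : SchwartzMap ℝ ℂ) (k : ℕ) :
    ∃ C : ℝ, 0 < C ∧ ∀ x, 0 < x → ‖f x‖ ≤ C * (x ^ k)⁻¹ := by
  obtain ⟨C, hC, h⟩ := f.decay k 0
  refine ⟨C, hC, fun x hx => ?_⟩
  have := h x
  rw [norm_iteratedFDeriv_zero, Real.norm_of_nonneg hx.le] at this
  rw [← div_eq_mul_inv, le_div_iff₀ (by positivity)]
  linarith

lemma summable_inv_succ_pow {k : ℕ} (hk : 2 ≤ k) :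
    Summable fun n : ℕ => (((n : ℝ) + 1) ^ k)⁻¹ := by
  have := (summable_nat_add_iff 1).2 (Real.summable_nat_pow_inv.2 (show 1 < k by omega))
  simpa using this

lemma summable_dil (f : SchwartzMap ℝ ℂ) {u : ℝ} (hu : 0 < u) :
    Summable fun n : ℕ => f ((n + 1) * u) := by
  obtain ⟨C, hC, h⟩ := schwartz_bound f 2
  refine Summable.of_norm_bounded (((summable_inv_succ_pow le_rfl).mul_left C).mul_right ((u ^ 2)⁻¹))
    fun n => (h _ (by positivity)).trans (le_of_eq ?_)
  rw [mul_pow, mul_inv, mul_assoc]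

lemma dilSum_decay (f : SchwartzMap ℝ ℂ) {k : ℕ} (hk : 2 ≤ k) :
    ∃ C : ℝ, ∀ u, 0 < u → ‖dilSum f u‖ ≤ C * (u ^ k)⁻¹ := by
  obtain ⟨C, hC, h⟩ := schwartz_bound f k
  refine ⟨∑' n : ℕ, C * (((n : ℝ) + 1) ^ k)⁻¹, fun u hu => ?_⟩
  rw [← tsum_mul_right]
  refine tsum_of_norm_bounded ((((summable_inv_succ_pow hk).mul_left C).mul_right _).hasSum)
    fun n => (h _ (by positivity)).trans (le_of_eq ?_)
  rw [mul_pow, mul_inv, mul_assoc]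

lemma dilSum_continuousOn (f : SchwartzMap ℝ ℂ) : ContinuousOn (dilSum f) (Ioi 0) := by
  obtain ⟨C, hC, h⟩ := schwartz_bound f 2
  intro u hu
  have hu : 0 < u := hu
  refine (ContinuousOn.continuousAt (s := Ioi (u / 2)) ?_ (Ioi_mem_nhds (by linarith))).continuousWithinAt
  refine continuousOn_tsum (u := fun n : ℕ => C * (((n : ℝ) + 1) ^ 2)⁻¹ * ((u / 2) ^ 2)⁻¹)
    (fun n => (f.continuous.comp (by fun_prop)).continuousOn)
    (((summable_inv_succ_pow le_rfl).mul_left C).mul_right _) ?_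
  intro n x hx
  have hx : u / 2 < x := hx
  have hx0 : 0 < x := by linarith
  refine (h _ (by positivity)).trans ?_
  rw [mul_pow, mul_inv, mul_assoc]
  gcongr

/-- Poisson summation for the lattice `u ℤ`, from the lattice `ℤ` applied to the dilate
`x ↦ f (x u)`. -/
lemma poisson_scaled (f : SchwartzMap ℝ ℂ) {u : ℝ} (hu : 0 < u) :
    ∑' n : ℤ, f (n * u) = (u⁻¹ : ℝ) • ∑' n : ℤ, 𝓕 f ((n : ℝ) / u) := by
  set g := SchwartzMap.compCLMOfContinuousLinearEquiv ℂ
    (ContinuousLinearEquiv.unitsEquivAut ℝ (Units.mk0 u hu.ne')) f with hg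
  have hgx : ∀ x, g x = f (x * u) := fun x => by
    simp [hg]
  have h := SchwartzMap.tsum_eq_tsum_fourier g 0
  simp only [zero_add, hgx, QuotientAddGroup.mk_zero, fourier_eval_zero, mul_one] at h
  rw [h, ← tsum_const_smul'']
  congr 1 with n
  rw [SchwartzMap.fourier_coe, SchwartzMap.fourier_coe, Real.fourier_real_eq, Real.fourier_real_eq]
  have := Measure.integral_comp_mul_right
    (fun v : ℝ => Real.fourierChar (-(v * ((n : ℝ) / u))) • f v) u
  rw [abs_of_pos (inv_pos.2 hu)] at this
  rw [← this]
  congr 1 with v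
  rw [hgx]
  congr 3
  field_simp

/-- By Poisson summation, `∑_{n ∈ ℤ} f(n u) = u⁻¹ ∑_{n ∈ ℤ} (𝓕 f)(n / u)`. Both zero terms vanish,
so the decay of `𝓕 f` at infinity controls `dilSum f` at `0`. -/
lemma dilSum_near_zero (f : SchwartzMap ℝ ℂ) (he : ∀ x, f (-x) = f x) (h0 : f 0 = 0)
    (hi : ∫ x, f x = 0) : ∃ C : ℝ, ∀ u, 0 < u → ‖dilSum f u‖ ≤ C * u := by
  have hF0 : 𝓕 f 0 = 0 := by
    rw [SchwartzMap.fourier_coe, Real.fourier_real_eq]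
    simpa using hi
  obtain ⟨C, hC, h⟩ := (𝓕 f).decay 2 0
  have hb : ∀ u : ℝ, 0 < u → ∀ n : ℤ, ‖𝓕 f ((n : ℝ) / u)‖ ≤ C * ((n : ℝ) ^ 2)⁻¹ * u ^ 2 := by
    intro u hu n
    -- For `n = 0` the right-hand side is `0`, since `0⁻¹ = 0`.
    rcases eq_or_ne n 0 with rfl | hn
    · simp [hF0]
    have h1 := h ((n : ℝ) / u)
    have hn' : (n : ℝ) ≠ 0 := by exact_mod_cast hn
    rw [norm_iteratedFDeriv_zero, Real.norm_eq_abs, sq_abs, div_pow] at h1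
    have h2 : 0 < (n : ℝ) ^ 2 := by positivity
    rw [div_mul_eq_mul_div, div_le_iff₀ (by positivity)] at h1
    rw [mul_right_comm, ← div_eq_mul_inv, le_div_iff₀ h2]
    linarith
  have hs : Summable fun n : ℤ => C * ((n : ℝ) ^ 2)⁻¹ := by
    have := (Real.summable_one_div_int_pow (p := 2)).2 one_lt_two
    simp only [one_div] at this
    exact this.mul_left C
  refine ⟨(∑' n : ℤ, C * ((n : ℝ) ^ 2)⁻¹) / 2, fun u hu => ?_⟩
  have h1 : ∑' n : ℤ, f (n * u) = 2 * dilSum f u := by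
    have hsum : Summable fun n : ℤ => f (n * u) := by
      apply Summable.of_nat_of_neg_add_one
      · exact (summable_nat_add_iff 1).1 (by simpa using summable_dil f hu)
      · have := summable_dil f hu
        refine this.congr fun n => ?_
        rw [← he]
        congr 1
        push_cast
        ring
    rw [tsum_int_eq_zero_add_two_mul_tsum_pnat (fun n => ?_) hsum, dilSum]
    · rw [tsum_pnat_eq_tsum_succ (f := fun n : ℕ => f (((n : ℤ) : ℝ) * u))]
      simp [h0]
    · rw [← he]; congr 1; push_cast; ring
  have h2 : ‖∑' n : ℤ, 𝓕 f ((n : ℝ) / u)‖ ≤ (∑' n : ℤ, C * ((n : ℝ) ^ 2)⁻¹) * u ^ 2 := by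
    rw [← tsum_mul_right]
    exact tsum_of_norm_bounded (hs.mul_right _).hasSum (hb u hu)
  have h3 : 2 * ‖dilSum f u‖ ≤ u⁻¹ * ((∑' n : ℤ, C * ((n : ℝ) ^ 2)⁻¹) * u ^ 2) := by
    have : 2 * ‖dilSum f u‖ = ‖2 * dilSum f u‖ := by simp
    rw [this, ← h1, poisson_scaled f hu, norm_smul, Real.norm_of_nonneg (inv_pos.2 hu).le]
    gcongr
  have h4 : u⁻¹ * ((∑' n : ℤ, C * ((n : ℝ) ^ 2)⁻¹) * u ^ 2) = (∑' n : ℤ, C * ((n : ℝ) ^ 2)⁻¹) * u := by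
    field_simp
  rw [h4] at h3
  linarith

/-! ### Mellin transforms -/

/-- A continuous function on `(0, ∞)` that is bounded near `0` and rapidly decreasing at infinity
has a convergent, holomorphic Mellin transform on `Re z > 0`. -/
lemma mellin_facts {g : ℝ → ℂ} (hc : ContinuousOn g (Ioi 0)) {C₀ : ℝ}
    (hC₀ : ∀ u, 0 < u → u < 1 → ‖g u‖ ≤ C₀)
    (hdec : ∀ k : ℕ, 2 ≤ k → ∃ C : ℝ, ∀ u, 0 < u → ‖g u‖ ≤ C * (u ^ k)⁻¹)
    {z : ℂ} (hz : 0 < z.re) : MellinConvergent g z ∧ DifferentiableAt ℂ (mellin g) z := by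
  obtain ⟨k, hk⟩ := exists_nat_gt (max z.re 2)
  obtain ⟨C, hC⟩ := hdec k (by exact_mod_cast ((le_max_right _ _).trans_lt hk).le)
  have hl : LocallyIntegrableOn g (Ioi 0) := hc.locallyIntegrableOn measurableSet_Ioi
  have htop : g =O[atTop] (· ^ (-(k : ℝ))) := by
    refine IsBigO.of_bound C ?_
    filter_upwards [eventually_gt_atTop 0] with u hu
    rw [Real.norm_of_nonneg (by positivity), Real.rpow_neg hu.le, Real.rpow_natCast]
    exact hC u hu
  have hbot : g =O[𝓝[>] 0] (· ^ (-(0 : ℝ))) := by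
    refine IsBigO.of_bound C₀ ?_
    filter_upwards [Ioo_mem_nhdsGT (zero_lt_one' ℝ)] with u hu
    simpa using hC₀ u hu.1 hu.2
  have hlt : z.re < k := (le_max_left _ _).trans_lt hk
  exact ⟨mellinConvergent_of_isBigO_rpow hl htop hlt hbot hz,
    mellin_differentiableAt_of_isBigO_rpow hl htop hlt hbot hz⟩

lemma mellin_facts_schwartz (f : SchwartzMap ℝ ℂ) {z : ℂ} (hz : 0 < z.re) :
    MellinConvergent f z ∧ DifferentiableAt ℂ (mellin f) z := by
  obtain ⟨C, hC, h⟩ := f.decay 0 0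
  refine mellin_facts (C₀ := C) f.continuous.continuousOn (fun u _ _ => ?_) (fun k _ => ?_) hz
  · simpa using h u
  · obtain ⟨C, -, h⟩ := schwartz_bound f k
    exact ⟨C, h⟩

lemma mellin_facts_dilSum (f : SchwartzMap ℝ ℂ) (he : ∀ x, f (-x) = f x) (h0 : f 0 = 0)
    (hi : ∫ x, f x = 0) {z : ℂ} (hz : 0 < z.re) :
    MellinConvergent (dilSum f) z ∧ DifferentiableAt ℂ (mellin (dilSum f)) z := by
  obtain ⟨C, hC⟩ := dilSum_near_zero f he h0 hi
  refine mellin_facts (C₀ := |C|) (dilSum_continuousOn f) (fun u hu hu1 => (hC u hu).trans ?_)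
    (fun k hk => dilSum_decay f hk) hz
  calc C * u ≤ |C| * u := by gcongr; exact le_abs_self C
    _ ≤ |C| * 1 := by gcongr
    _ = |C| := mul_one _

/-- In the half-plane of absolute convergence, integrate the series termwise. -/
lemma mellin_dilSum_of_one_lt_re (f : SchwartzMap ℝ ℂ) {z : ℂ} (hz : 1 < z.re) :
    mellin (dilSum f) z = riemannZeta z * mellin f z := by
  have hf := (mellin_facts_schwartz f (z := z) (by linarith)).1
  have hpos : ∀ n : ℕ, (0 : ℝ) < n + 1 := fun n => by positivity
  have hconv : ∀ n : ℕ, MellinConvergent (fun u => f ((n + 1) * u)) z := fun n =>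
    (MellinConvergent.comp_mul_left (hpos n)).2 hf
  have hnorm : ∀ n : ℕ, ∫ u in Ioi (0 : ℝ), ‖(u : ℂ) ^ (z - 1) • f ((n + 1) * u)‖ =
      ((n : ℝ) + 1) ^ (-z.re) * ∫ u in Ioi (0 : ℝ), ‖(u : ℂ) ^ (z - 1) • f u‖ := by
    intro n
    have h := integral_comp_mul_left_Ioi
      (fun u : ℝ => ‖(u : ℂ) ^ (z - 1) • f u‖) 0 (hpos n)
    rw [mul_zero, smul_eq_mul] at h
    have h1 : -z.re = -1 - (z.re - 1) := by ring
    rw [h1, Real.rpow_sub (hpos n), Real.rpow_neg_one, div_mul_eq_mul_div, ← h, eq_div_iff (by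
      have := hpos n; positivity), mul_comm, ← integral_const_mul]
    refine setIntegral_congr_fun measurableSet_Ioi fun u hu => ?_
    have hu : 0 < u := hu
    simp only [norm_smul]
    have hp : 0 < ((n : ℝ) + 1) * u := mul_pos (hpos n) hu
    rw [Complex.norm_cpow_eq_rpow_re_of_pos hu, Complex.norm_cpow_eq_rpow_re_of_pos hp,
      Real.mul_rpow (hpos n).le hu.le, Complex.sub_re, Complex.one_re, mul_assoc]
  have hsum : Summable fun n : ℕ => ((n : ℝ) + 1) ^ (-z.re) := by
    have := (summable_nat_add_iff 1).2 (Real.summable_nat_rpow (p := -z.re) |>.2 (by linarith))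
    simpa using this
  have key := integral_tsum_of_summable_integral_norm (μ := volume.restrict (Ioi (0 : ℝ)))
    (F := fun (n : ℕ) (u : ℝ) => (u : ℂ) ^ (z - 1) • f ((n + 1) * u)) (fun n => hconv n)
    (by simp only [hnorm]; exact hsum.mul_right _)
  have : mellin (dilSum f) z = ∫ u in Ioi (0 : ℝ), ∑' n : ℕ, (u : ℂ) ^ (z - 1) • f ((n + 1) * u) := by
    refine setIntegral_congr_fun measurableSet_Ioi fun u hu => ?_
    simp only [dilSum, smul_eq_mul, tsum_mul_left]
  rw [this, ← key, zeta_eq_tsum_one_div_nat_add_one_cpow hz, ← tsum_mul_right]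
  congr 1 with n
  have := mellin_comp_mul_left f z (hpos n)
  rw [mellin] at this
  rw [this, Complex.cpow_neg, smul_eq_mul, one_div]
  push_cast
  rfl

/-- Analytic continuation of `mellin_dilSum_of_one_lt_re`. The quadrant `Re z > 0`, `Im z < 0` is
convex, avoids the pole `1` of `ζ`, and meets the half-plane `Re z > 1`. -/
lemma mellin_dilSum (f : SchwartzMap ℝ ℂ) (he : ∀ x, f (-x) = f x) (h0 : f 0 = 0)
    (hi : ∫ x, f x = 0) {z : ℂ} (hz : 0 < z.re) (hz' : z.im < 0) :
    mellin (dilSum f) z = riemannZeta z * mellin f z := by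
  set U : Set ℂ := {z | 0 < z.re} ∩ {z | z.im < 0}
  have hU : IsOpen U := (isOpen_lt continuous_const Complex.continuous_re).inter
    (isOpen_lt Complex.continuous_im continuous_const)
  have hUc : IsPreconnected U :=
    ((convex_halfSpace_re_gt 0).inter (convex_halfSpace_im_lt 0)).isPreconnected
  have hA : AnalyticOnNhd ℂ (mellin (dilSum f)) U := DifferentiableOn.analyticOnNhd
    (fun z hz => (mellin_facts_dilSum f he h0 hi hz.1).2.differentiableWithinAt) hU
  have hB : AnalyticOnNhd ℂ (fun z => riemannZeta z * mellin f z) U :=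
    DifferentiableOn.analyticOnNhd (fun z hz => by
      have h1 : z ≠ 1 := by
        rintro rfl
        simpa using hz.2
      exact ((differentiableAt_riemannZeta h1).mul
        (mellin_facts_schwartz f hz.1).2).differentiableWithinAt) hU
  have h2 : (2 - Complex.I) ∈ U := by constructor <;> simp
  refine hA.eqOn_of_preconnected_of_eventuallyEq hB hUc h2 ?_ (⟨hz, hz'⟩ : z ∈ U)
  filter_upwards [(isOpen_lt continuous_const Complex.continuous_re).mem_nhds
    (show (1 : ℝ) < (2 - Complex.I).re by simp)] with w hw
  exact mellin_dilSum_of_one_lt_re f hw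

/-- The functional equation moves the zero `1/2 + i s` to `1/2 - i s`. -/
lemma zeta_reflect {s : ℝ} (hζ : riemannZeta (1/2 + Complex.I * s) = 0) :
    riemannZeta (1/2 - Complex.I * s) = 0 := by
  have h : (1/2 - Complex.I * s : ℂ) = 1 - (1/2 + Complex.I * s) := by ring
  rw [h, riemannZeta_one_sub, hζ, mul_zero]
  · intro n h
    have := congrArg Complex.re h
    norm_num at this
    have h2 : (0 : ℝ) ≤ n := n.cast_nonneg
    linarith
  · intro h
    have := congrArg Complex.re h
    norm_num at this

/-! ### Unfolding over the circle -/

/-- Unfolding: `(0, ∞)` is tiled by the intervals `(μ^j, μ^{j+1}]`, each a dilate of `(1, μ]`. The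
factor `μ^j` is the Jacobian of the dilation, as `H` is integrated against `du`. -/
lemma integral_unfold {μ : ℝ} (hμ : 1 < μ) {H : ℝ → ℂ} (hH : IntegrableOn H (Ioi 0)) :
    ∫ u in Ioc 1 μ, ∑' j : ℤ, ((μ ^ j : ℝ) : ℂ) * H (μ ^ j * u) = ∫ u in Ioi 0, H u := by
  have hμ0 : 0 < μ := by linarith
  have hU : ⋃ j : ℤ, Ioc (μ ^ j) (μ ^ (j + 1)) = Ioi (0 : ℝ) := by
    ext x
    simp only [mem_iUnion, mem_Ioi]
    constructor
    · rintro ⟨j, hj⟩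
      exact (zpow_pos hμ0 j).trans hj.1
    · intro hx
      exact exists_mem_Ioc_zpow hx hμ
  have hd : Pairwise (Function.onFun Disjoint fun j : ℤ => Ioc (μ ^ j) (μ ^ (j + 1))) := by
    have aux : ∀ i j : ℤ, i < j → Disjoint (Ioc (μ ^ i) (μ ^ (i + 1))) (Ioc (μ ^ j) (μ ^ (j + 1))) := by
      intro i j hij
      refine Set.disjoint_left.2 fun x hx hx' => ?_
      have := zpow_le_zpow_right₀ hμ.le (show i + 1 ≤ j by omega)
      linarith [hx.2, hx'.1]
    intro i j hij
    rcases lt_or_gt_of_ne hij with h | h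
    · exact aux i j h
    · exact (aux j i h).symm
  have hsub : ∀ (E : Type) [NormedAddCommGroup E] [NormedSpace ℝ E] (G : ℝ → E) (j : ℤ),
      ∫ u in Ioc 1 μ, (μ ^ j) • G (μ ^ j * u) = ∫ u in Ioc (μ ^ j) (μ ^ (j + 1)), G u := by
    intro E _ _ G j
    have hj := zpow_pos hμ0 j
    rw [integral_smul, ← intervalIntegral.integral_of_le hμ.le,
      intervalIntegral.integral_comp_mul_left _ hj.ne', smul_smul, mul_inv_cancel₀ hj.ne', one_smul,
      mul_one, ← zpow_add_one₀ hμ0.ne',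
      intervalIntegral.integral_of_le (zpow_le_zpow_right₀ hμ.le (by omega))]
  have hm : ∀ j : ℤ, MeasurableSet (Ioc (μ ^ j) (μ ^ (j + 1))) := fun j => measurableSet_Ioc
  have h1 := hasSum_integral_iUnion hm hd (hU ▸ hH)
  have h2 := hasSum_integral_iUnion hm hd (f := fun u => ‖H u‖) (hU ▸ hH.norm)
  have hint : ∀ j : ℤ, IntegrableOn (fun u => ((μ ^ j : ℝ) : ℂ) * H (μ ^ j * u)) (Ioc 1 μ) := by
    intro j
    have hj := zpow_pos hμ0 j
    refine Integrable.const_mul ?_ _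
    have : IntegrableOn (fun u => H (μ ^ j * u)) (Ioi 0) := by
      rw [integrableOn_Ioi_comp_mul_left_iff _ _ hj, mul_zero]
      exact hH
    exact this.mono_set fun x hx => lt_trans one_pos hx.1
  rw [← integral_tsum_of_summable_integral_norm hint, ← hU, ← h1.tsum_eq]
  · congr 1 with j
    rw [← hsub ℂ]
    simp only [Complex.real_smul]
  · refine h2.summable.congr fun j => ?_
    rw [← hsub ℝ]
    simp only [norm_mul, Complex.norm_real, smul_eq_mul,
      Real.norm_of_nonneg (zpow_pos hμ0 j).le]

/-- Since `L s = 2πk`, the character `u ↦ u^{-is}` is trivial on `μ^ℤ`. -/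
lemma zpow_cpow_eq_one {s L μ : ℝ} (hs : 0 < s) {k : ℕ} (hL : L = 2 * Real.pi * k / s)
    (hμ : μ = Real.exp L) (j : ℤ) : ((μ ^ j : ℝ) : ℂ) ^ (-(Complex.I * s)) = 1 := by
  have hj : 0 < μ ^ j := zpow_pos (hμ ▸ Real.exp_pos L) j
  rw [Complex.cpow_def_of_ne_zero (by exact_mod_cast hj.ne'), ← Complex.ofReal_log hj.le,
    Real.log_zpow, hμ, Real.log_exp, Complex.exp_eq_one_iff]
  refine ⟨-(j * k), ?_⟩
  have hs' : (s : ℂ) ≠ 0 := by exact_mod_cast hs.ne'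
  rw [hL]
  push_cast
  field_simp

lemma integral_SigmaMu_eq_zero (s : ℝ) (hs : 0 < s)
    (hζ : riemannZeta (1/2 + Complex.I * s) = 0)
    (k : ℕ) (hk : 0 < k) (L : ℝ) (hL : L = 2 * Real.pi * k / s)
    (μ : ℝ) (hμ : μ = Real.exp L)
    (f : SchwartzMap ℝ ℂ) (he : ∀ x : ℝ, f (-x) = f x) (h0 : f 0 = 0) (hi : ∫ x : ℝ, f x = 0) :
    ∫ u in Ioc (1:ℝ) μ,
        SigmaMu μ (Emap (⇑f)) u * (u : ℂ) ^ (-(Complex.I * s)) / (u : ℂ) = 0 := by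
  have hL0 : 0 < L := by rw [hL]; positivity
  have hμ1 : 1 < μ := by rw [hμ]; exact Real.one_lt_exp_iff.2 hL0
  have hμ0 : 0 < μ := by linarith
  set z : ℂ := 1/2 - Complex.I * s with hz
  have hzre : 0 < z.re := by simp [hz]
  have hzim : z.im < 0 := by simpa [hz] using hs
  have hM : mellin (dilSum f) z = 0 := by
    rw [mellin_dilSum f he h0 hi hzre hzim, zeta_reflect hζ, zero_mul]
  rw [mellin, ← integral_unfold hμ1 (mellin_facts_dilSum f he h0 hi hzre).1] at hM
  rw [← hM]
  refine setIntegral_congr_fun measurableSet_Ioc fun u hu => ?_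
  have hu0 : 0 < u := lt_trans one_pos hu.1
  simp only [SigmaMu]
  rw [mul_div_assoc, ← tsum_mul_right]
  congr 1 with j
  have hj := zpow_pos hμ0 j
  have hv : ((μ ^ j * u : ℝ) : ℂ) ≠ 0 := by exact_mod_cast (mul_pos hj hu0).ne'
  have hz1 : z - 1 = 1/2 + -(Complex.I * s) - 1 := by rw [hz]; ring
  rw [Emap, ← dilSum, hz1, Complex.cpow_sub _ _ hv, Complex.cpow_add _ _ hv, Complex.cpow_one]
  have h1 : ((μ ^ j * u : ℝ) : ℂ) ^ (-(Complex.I * s)) = (u : ℂ) ^ (-(Complex.I * s)) := by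
    rw [Complex.ofReal_mul, Complex.mul_cpow_ofReal_nonneg hj.le hu0.le,
      zpow_cpow_eq_one hs hL hμ, one_mul]
  have hu' : (u : ℂ) ≠ 0 := by exact_mod_cast hu0.ne'
  have hj' : ((μ ^ j : ℝ) : ℂ) ≠ 0 := by exact_mod_cast hj.ne'
  rw [h1, smul_eq_mul, Complex.ofReal_mul]
  field_simp

/-! ### The measure on the circle and the failure of density -/

lemma circleMeasure_apply_univ (μ : ℝ) :
    circleMeasure μ univ = ∫⁻ u in Ioc 1 μ, ENNReal.ofReal u⁻¹ := by
  rw [circleMeasure, Measure.restrict_apply_univ, withDensity_apply _ measurableSet_Ioc]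

lemma circleMeasure_finite (μ : ℝ) : IsFiniteMeasure (circleMeasure μ) := by
  refine ⟨?_⟩
  rw [circleMeasure_apply_univ]
  calc ∫⁻ u in Ioc 1 μ, ENNReal.ofReal u⁻¹ ≤ ∫⁻ u in Ioc 1 μ, 1 :=
        setLIntegral_mono' measurableSet_Ioc fun u hu => by
          rw [ENNReal.ofReal_le_one]
          exact inv_le_one_of_one_le₀ hu.1.le
    _ < ⊤ := by simp

lemma circleMeasure_ne_zero {μ : ℝ} (hμ : 1 < μ) : circleMeasure μ ≠ 0 := by
  intro h
  have h1 : 0 < ∫⁻ u in Ioc 1 μ, ENNReal.ofReal u⁻¹ := by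
    rw [setLIntegral_pos_iff (by fun_prop)]
    have : Ioc 1 μ ⊆ (Function.support fun u : ℝ => ENNReal.ofReal u⁻¹) ∩ Ioc 1 μ := by
      intro u hu
      have : 0 < u := lt_trans one_pos hu.1
      exact ⟨(ENNReal.ofReal_pos.2 (inv_pos.2 this)).ne', hu⟩
    refine lt_of_lt_of_le ?_ (measure_mono this)
    simpa using hμ
  rw [← circleMeasure_apply_univ, h] at h1
  simp at h1

theorem stmt16 (s : ℝ) (hs : 0 < s)
    (hζ : riemannZeta (1/2 + Complex.I * s) = 0)
    (k : ℕ) (hk : 0 < k) (L : ℝ) (hL : L = 2 * Real.pi * k / s)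
    (μ : ℝ) (hμ : μ = Real.exp L) :
    (∀ f : SchwartzMap ℝ ℂ, (∀ x : ℝ, f (-x) = f x) → f 0 = 0 → (∫ x : ℝ, f x = 0) →
      ∫ u in Ioc (1:ℝ) μ,
        SigmaMu μ (Emap (⇑f)) u * (u : ℂ) ^ (-(Complex.I * s)) / (u : ℂ) = 0) ∧
    ¬ Dense {g : Lp ℂ 2 (circleMeasure μ) |
        ∃ f : SchwartzMap ℝ ℂ, (∀ x : ℝ, f (-x) = f x) ∧ f 0 = 0 ∧ (∫ x : ℝ, f x = 0) ∧
          ∀ᵐ u ∂(circleMeasure μ), g u = SigmaMu μ (Emap (⇑f)) u} := by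
  
  have hL0 : 0 < L := by rw [hL]; positivity
  have hμ1 : 1 < μ := by rw [hμ]; exact Real.one_lt_exp_iff.2 hL0
  refine ⟨integral_SigmaMu_eq_zero s hs hζ k hk L hL μ hμ, fun hdense => ?_⟩
  have := circleMeasure_finite μ
  have hpos : ∀ᵐ u ∂(circleMeasure μ), u ∈ Ioc 1 μ := ae_restrict_mem measurableSet_Ioc
  have hnorm : ∀ u : ℝ, 0 < u → ‖(u : ℂ) ^ (Complex.I * s)‖ = 1 := fun u hu => by
    rw [Complex.norm_cpow_eq_rpow_re_of_pos hu]
    simp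
  have hmem : MemLp (fun u : ℝ => (u : ℂ) ^ (Complex.I * s)) 2 (circleMeasure μ) := by
    refine MemLp.of_bound (Measurable.aestronglyMeasurable (by fun_prop)) 1 ?_
    filter_upwards [hpos] with u hu
    exact (hnorm u (lt_trans one_pos hu.1)).le
  set χ := hmem.toLp with hχ
  have hcl : IsClosed {g : Lp ℂ 2 (circleMeasure μ) | inner ℂ χ g = 0} :=
    isClosed_eq (by fun_prop) continuous_const
  have hall : ∀ g, inner ℂ χ g = 0 := by
    intro g
    refine hcl.closure_subset_iff.2 ?_ (hdense g)
    rintro g ⟨f, he, h0, hi, hg⟩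
    rw [mem_ofPred_eq, L2.inner_def, ← integral_SigmaMu_eq_zero s hs hζ k hk L hL μ hμ f he h0 hi]
    have h1 : ∫ u, inner ℂ (χ u) (g u) ∂(circleMeasure μ) =
        ∫ u, SigmaMu μ (Emap f) u * (u : ℂ) ^ (-(Complex.I * s)) ∂(circleMeasure μ) := by
      refine integral_congr_ae ?_
      filter_upwards [hpos, hg, hmem.coeFn_toLp] with u hu hgu hχu
      have hu0 : 0 < u := lt_trans one_pos hu.1
      have hconj := Complex.cpow_conj (u : ℂ) (Complex.I * s)
        (by rw [Complex.arg_ofReal_of_nonneg hu0.le]; exact Real.pi_pos.ne)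
      rw [Complex.conj_ofReal] at hconj
      rw [hgu, hχu, RCLike.inner_apply, ← hconj]
      simp
    rw [h1, circleMeasure, setIntegral_withDensity_eq_setIntegral_toReal_smul (by fun_prop)
      (by simp) _ measurableSet_Ioc]
    refine setIntegral_congr_fun measurableSet_Ioc fun u hu => ?_
    have hu0 : 0 < u := lt_trans one_pos hu.1
    simp only [ENNReal.toReal_ofReal (inv_pos.2 hu0).le, Complex.real_smul]
    push_cast
    ring
  have hχ0 : χ = 0 := inner_self_eq_zero.1 (hall χ)
  refine circleMeasure_ne_zero hμ1 (ae_eq_bot.1 ?_)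
  rw [← Filter.eventually_false_iff_eq_bot]
  have hz := Lp.coeFn_zero ℂ 2 (circleMeasure μ)
  rw [← hχ0] at hz
  filter_upwards [hpos, hz, hmem.coeFn_toLp] with u hu h1 h2
  have := hnorm u (lt_trans one_pos hu.1)
  rw [← h2, h1] at this
  simp at this
end

section
/- Let f ∈ S₀^ev and for L > 0 and n ∈ ℤ \ {0} define h(L,n) = L^{−1/2} · ζ(1/2 − 2πin/L) · ψ_f(2πn/L). Then h(·,n) is smooth in L on (0,∞), and for all m, k ∈ ℕ there exists C > 0 such that Σ_{n≠0} |∂_L^m h(L,n)|² ≤ C·L^k for all L ∈ (0,1]; in particular Σ_{n≠0} |∂_L^m h(L,n)|² = O(L^k) as L → 0⁺ for all m, k. -/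
/-!
The function `G(s) = ζ(s) · M f(s)`, with `M f` the Mellin transform of `f`, is holomorphic for
`Re s > 0`, `s ≠ 1`, and decays faster than any power of `|s|` in the strip `1/4 ≤ Re s ≤ 3/4`.
Indeed `ζ(s) = s/(s-1) - s ∫₁^∞ (t - ⌊t⌋) t^{-s-1} dt` for `Re s > 0` (`zeta_eq`: Abel summation
for `Re s > 1`, then the identity theorem), so `ζ(s) = O(|s|)` in the strip, while repeated
integration by parts `s · M f(s) = -M f'(s+1)` shows that `M f` decays rapidly
(`exists_mellin_decay`).

Since `ψ_f(z) = M f(1/2 - iz)`, the function `h(·, n)` is the restriction to `(0, ∞)` of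
`w ↦ w^{-1/2} G(1/2 - 2πin/w)`, holomorphic in a complex neighbourhood of `(0, ∞)`; this gives
smoothness. For `0 < L ≤ 1` the disc of radius `L²/(100|n|)` about `L` is mapped by
`w ↦ 1/2 - 2πin/w` into the strip and into `{|s| ≥ |n|/L}` (`mem_domH_and_bounds`).
Cauchy's estimate on this disc loses only a factor `O((|n|/L)^{2m})`, which the rapid decay of `G`
absorbs, so that `|∂_L^m h(L, n)| ≤ D (L/|n|)^{k+1}` for every `k`
(`exists_iteratedDeriv_bound`). Squaring and summing over `n` finishes the proof.
-/

open MeasureTheory Set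

/-- `ψ_f(z) = ∫₀^∞ f(u) u^{1/2 - iz} du/u`. -/
noncomputable def psi (f : ℝ → ℂ) (z : ℂ) : ℂ :=
  ∫ u in Ioi (0:ℝ), f u * (u : ℂ) ^ ((1 : ℂ)/2 - Complex.I * z) / (u : ℂ)

/-- `h(L, n) = L^{-1/2} ζ(1/2 - 2πin/L) ψ_f(2πn/L)`. -/
noncomputable def hfun (f : ℝ → ℂ) (L : ℝ) (n : ℤ) : ℂ :=
  (L : ℂ) ^ (-(1/2 : ℂ)) *
    riemannZeta (1/2 - 2 * (Real.pi : ℂ) * Complex.I * (n : ℂ) / (L : ℂ)) *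
    psi f ((2 * Real.pi * (n : ℝ) / L : ℝ) : ℂ)

section

open Filter Topology Complex Asymptotics

/-! ### Mellin transforms on vertical strips -/

/-- On a closed strip `a ≤ Re s ≤ b` the Mellin integrand is dominated by the sum of its absolute
values on the two edges, since `t^{σ-1} ≤ t^{a-1} + t^{b-1}` for `a ≤ σ ≤ b`. -/
lemma exists_mellin_bound {f : ℝ → ℂ} {a b : ℝ}
    (ha : MellinConvergent f a) (hb : MellinConvergent f b) :
    ∃ C : ℝ, 0 ≤ C ∧ ∀ s : ℂ, a ≤ s.re → s.re ≤ b → ‖mellin f s‖ ≤ C := by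
  have hn : ∀ s : ℂ, ∀ t ∈ Ioi (0:ℝ), ‖(t : ℂ) ^ (s - 1) • f t‖ = t ^ (s.re - 1) * ‖f t‖ := by
    intro s t ht
    rw [norm_smul, Complex.norm_cpow_eq_rpow_re_of_pos ht]
    simp
  refine ⟨∫ t in Ioi (0:ℝ), (‖(t : ℂ) ^ ((a:ℂ) - 1) • f t‖ + ‖(t : ℂ) ^ ((b:ℂ) - 1) • f t‖),
    integral_nonneg fun t => by positivity, fun s has hsb => ?_⟩
  refine norm_integral_le_of_norm_le (ha.norm.add hb.norm) ?_
  filter_upwards [ae_restrict_mem measurableSet_Ioi] with t ht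
  rw [hn s t ht, hn a t ht, hn b t ht, ← add_mul]
  gcongr
  have ht0 : (0:ℝ) < t := ht
  simp only [ofReal_re]
  rcases le_total 1 t with h | h
  · have := Real.rpow_le_rpow_of_exponent_le h (by linarith : s.re - 1 ≤ b - 1)
    have := Real.rpow_nonneg ht0.le (a - 1)
    linarith
  · have := Real.rpow_le_rpow_of_exponent_ge ht0 h (by linarith : a - 1 ≤ s.re - 1)
    have := Real.rpow_nonneg ht0.le (b - 1)
    linarith

/-! ### Growth of the zeta function in the strip `1/4 ≤ Re s ≤ 3/4` -/

/-- The fractional part `t - ⌊t⌋`, cut off to `t > 1`. -/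
noncomputable def fractTail : ℝ → ℂ :=
  indicator (Ioi 1) fun t => ((t - ⌊t⌋₊ : ℝ) : ℂ)

lemma norm_fractTail_le (t : ℝ) : ‖fractTail t‖ ≤ 1 := by
  unfold fractTail
  by_cases h : t ∈ Ioi (1:ℝ)
  · rw [indicator_of_mem h, norm_real, Real.norm_eq_abs, abs_le]
    have h1 : (1:ℝ) < t := h
    have := Nat.floor_le (by linarith : 0 ≤ t)
    have := Nat.lt_floor_add_one t
    constructor <;> linarith
  · rw [indicator_of_notMem h]; simp

lemma fractTail_locallyIntegrableOn : LocallyIntegrableOn fractTail (Ioi 0) := by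
  have hm : Measurable fractTail := by
    refine Measurable.indicator ?_ measurableSet_Ioi
    refine measurable_ofReal.comp (measurable_id.sub ?_)
    exact measurable_from_nat.comp Nat.measurable_floor
  refine LocallyIntegrable.locallyIntegrableOn ?_ _
  exact (locallyIntegrable_const (1:ℝ)).mono hm.aestronglyMeasurable
    (Eventually.of_forall fun t => by simpa using norm_fractTail_le t)

lemma fractTail_isBigO_top : fractTail =O[atTop] (· ^ (-(0:ℝ))) := by
  refine IsBigO.of_bound 1 (Eventually.of_forall fun t => ?_)
  simpa using norm_fractTail_le t

lemma fractTail_isBigO_zero (b : ℝ) : fractTail =O[𝓝[>] 0] (· ^ (-b)) := by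
  refine IsBigO.of_bound 1 ?_
  filter_upwards [mem_nhdsWithin_of_mem_nhds (Iio_mem_nhds (zero_lt_one (α := ℝ)))] with t ht
  have : fractTail t = 0 := indicator_of_notMem (by simpa using (le_of_lt ht)) _
  rw [this]; simp

lemma fractTail_convergent {s : ℂ} (hs : s.re < 0) : MellinConvergent fractTail s :=
  mellinConvergent_of_isBigO_rpow fractTail_locallyIntegrableOn fractTail_isBigO_top hs
    (fractTail_isBigO_zero (s.re - 1)) (by linarith)

lemma fractTail_mellin_differentiableAt {s : ℂ} (hs : s.re < 0) :
    DifferentiableAt ℂ (mellin fractTail) s :=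
  mellin_differentiableAt_of_isBigO_rpow fractTail_locallyIntegrableOn fractTail_isBigO_top hs
    (fractTail_isBigO_zero (s.re - 1)) (by linarith)

/-- Abel summation gives `ζ(s) = s ∫₁^∞ ⌊t⌋ t^{-s-1} dt`; subtracting from
`∫₁^∞ t^{-s} dt = 1/(s-1)` turns `⌊t⌋` into the fractional part. -/
lemma zeta_eq_of_one_lt {s : ℂ} (hs : 1 < s.re) :
    riemannZeta s = s / (s - 1) - s * mellin fractTail (-s) := by
  have h1 : riemannZeta s = s * ∫ t in Ioi (1:ℝ), ((⌊t⌋₊ : ℂ)) * (t:ℂ) ^ (-(s + 1)) := by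
    rw [← LSeries_one_eq_riemannZeta hs,
      LSeries_eq_mul_integral (r := 1) _ zero_le_one hs (LSeriesSummable_one_iff.mpr hs) ?_]
    · simp
    · refine IsBigO.of_bound 1 (Eventually.of_forall fun n => ?_)
      simp
  have hre : (-s).re < -1 := by simpa using hs
  have h2 : ∫ t in Ioi (1:ℝ), (t:ℂ) ^ (-s) = 1 / (s - 1) := by
    rw [integral_Ioi_cpow_of_lt hre one_pos, ofReal_one, one_cpow, neg_div, ← div_neg]
    congr 1; ring
  have hpt : ∀ t ∈ Ioi (1:ℝ), (t:ℂ) ^ (-s - 1) • ((t - ⌊t⌋₊ : ℝ) : ℂ)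
      = (t:ℂ) ^ (-s) - (⌊t⌋₊ : ℂ) * (t:ℂ) ^ (-(s+1)) := by
    intro t ht
    have ht0 : (t:ℂ) ≠ 0 := by
      have : (0:ℝ) < t := lt_trans one_pos ht
      exact_mod_cast this.ne'
    have e1 : -(s+1) = -s - 1 := by ring
    have e2 : (t:ℂ) ^ (-s) = (t:ℂ) ^ (-s - 1) * t := by
      rw [show -s = (-s - 1) + 1 by ring, cpow_add _ _ ht0, cpow_one]; congr 2; ring
    rw [e1, e2, smul_eq_mul]; push_cast; ring
  have h3 : mellin fractTail (-s) = ∫ t in Ioi (1:ℝ), (t:ℂ) ^ (-s - 1) • ((t - ⌊t⌋₊ : ℝ) : ℂ) := by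
    unfold mellin fractTail
    have : (fun t : ℝ => (t:ℂ) ^ (-s - 1) • (Ioi (1:ℝ)).indicator (fun t : ℝ => ((t - ⌊t⌋₊ : ℝ) : ℂ)) t)
        = (Ioi (1:ℝ)).indicator (fun t : ℝ => (t:ℂ) ^ (-s - 1) • ((t - ⌊t⌋₊ : ℝ) : ℂ)) := by
      ext t; simp [indicator]
    rw [this, setIntegral_indicator measurableSet_Ioi]
    congr 2
    ext t; simp only [mem_inter_iff, mem_Ioi]
    exact ⟨fun h => h.2, fun h => ⟨one_pos.trans h, h⟩⟩
  have hi1 := integrableOn_Ioi_cpow_of_lt hre one_pos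
  have hi2 : IntegrableOn (fun t : ℝ => (t:ℂ) ^ (-s - 1) • ((t - ⌊t⌋₊ : ℝ) : ℂ)) (Ioi 1) := by
    have := (fractTail_convergent (s := -s) (by linarith)).mono_set (Ioi_subset_Ioi (zero_le_one (α := ℝ)))
    refine this.congr_fun (fun t ht => ?_) measurableSet_Ioi
    simp only [fractTail, indicator_of_mem ht]
  have h4 : ∫ t in Ioi (1:ℝ), ((⌊t⌋₊ : ℂ)) * (t:ℂ) ^ (-(s + 1)) =
      1 / (s - 1) - mellin fractTail (-s) := by
    rw [h3, ← h2, ← integral_sub hi1 hi2]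
    refine setIntegral_congr_fun measurableSet_Ioi fun t ht => ?_
    simp only [hpt t ht]; ring
  rw [h1, h4]; ring

/-- The formula of `zeta_eq_of_one_lt` continued to `Re s > 0`: after multiplication by `s - 1` both
sides are holomorphic in the half plane. -/
lemma zeta_eq {s : ℂ} (hs : 0 < s.re) (h1 : s ≠ 1) :
    riemannZeta s = s / (s - 1) - s * mellin fractTail (-s) := by
  have hO : IsOpen {s : ℂ | 0 < s.re} := isOpen_lt continuous_const continuous_re
  have hA : AnalyticOnNhd ℂ riemannZeta₁ {s : ℂ | 0 < s.re} :=
    differentiable_riemannZeta₁.differentiableOn.analyticOnNhd hO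
  have hB : AnalyticOnNhd ℂ (fun s => s - (s - 1) * s * mellin fractTail (-s))
      {s : ℂ | 0 < s.re} := by
    refine DifferentiableOn.analyticOnNhd (fun s hs => ?_) hO
    have : DifferentiableAt ℂ (fun s => mellin fractTail (-s)) s :=
      (fractTail_mellin_differentiableAt (s := -s) (by simpa using hs)).comp s differentiableAt_id.neg
    exact (by fun_prop : DifferentiableAt ℂ (fun s => s - (s - 1) * s * mellin fractTail (-s)) s).differentiableWithinAt
  have key : ∀ z : ℂ, z ≠ 1 → riemannZeta₁ z = (z - 1) * riemannZeta z := by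
    intro z hz
    have : z - 1 ≠ 0 := sub_ne_zero.mpr hz
    rw [riemannZeta₁, riemannZeta_eq_inv_sub_add hz]; field_simp
  have hE := hA.eqOn_of_preconnected_of_eventuallyEq hB
    (convex_halfSpace_re_gt 0).isPreconnected (z₀ := 2) (by simp) ?_ hs
  · have h : s - 1 ≠ 0 := sub_ne_zero.mpr h1
    simp only [key s h1] at hE
    apply mul_left_cancel₀ h
    rw [hE]; field_simp
  · filter_upwards [(isOpen_lt continuous_const continuous_re : IsOpen {s : ℂ | 1 < s.re}).mem_nhds
      (by simp : (2:ℂ) ∈ {s : ℂ | 1 < s.re})] with z hz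
    have hz1 : z ≠ 1 := by rintro rfl; simp at hz
    have h : z - 1 ≠ 0 := sub_ne_zero.mpr hz1
    rw [key z hz1, zeta_eq_of_one_lt hz]; field_simp

lemma exists_zeta_bound : ∃ C : ℝ, 0 ≤ C ∧ ∀ s : ℂ, 1/4 ≤ s.re → s.re ≤ 3/4 →
    ‖riemannZeta s‖ ≤ C * ‖s‖ := by
  obtain ⟨C, hC, h⟩ := exists_mellin_bound (f := fractTail) (a := -(3/4)) (b := -(1/4))
    (fractTail_convergent (by simp)) (fractTail_convergent (by simp))
  refine ⟨4 + C, by positivity, fun s h1 h2 => ?_⟩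
  have hs1 : 1/4 ≤ ‖s - 1‖ := by
    have := abs_re_le_norm (s - 1)
    rw [sub_re, one_re, abs_le] at this
    linarith [this.1]
  have hne : s ≠ 1 := by rintro rfl; norm_num at h2
  rw [zeta_eq (by linarith) hne]
  refine (norm_sub_le _ _).trans ?_
  rw [norm_div, norm_mul, add_mul, mul_comm ‖s‖]
  gcongr
  · rw [div_le_iff₀ (by linarith)]
    nlinarith [norm_nonneg s]
  · exact h _ (by simp; linarith) (by simp; linarith)

/-! ### Rapid decay of Mellin transforms of Schwartz functions -/

lemma schwartz_isBigO_top (f : SchwartzMap ℝ ℂ) (a : ℝ) : (f : ℝ → ℂ) =O[atTop] (· ^ a) := by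
  refine ((f.isBigO_cocompact_rpow a).mono atTop_le_cocompact).congr' EventuallyEq.rfl ?_
  filter_upwards [eventually_ge_atTop 0] with t ht
  simp [abs_of_nonneg ht]

lemma schwartz_isBigO_zero (f : SchwartzMap ℝ ℂ) : (f : ℝ → ℂ) =O[𝓝[>] 0] (· ^ (-(0:ℝ))) := by
  have := (f.continuous.tendsto 0).isBigO_one ℝ
  simpa using this.mono nhdsWithin_le_nhds

lemma schwartz_mellinConvergent (f : SchwartzMap ℝ ℂ) {s : ℂ} (hs : 0 < s.re) :
    MellinConvergent f s :=
  mellinConvergent_of_isBigO_rpow (f.continuous.locallyIntegrable.locallyIntegrableOn _)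
    (schwartz_isBigO_top f (-(s.re + 1))) (by linarith) (schwartz_isBigO_zero f) hs

lemma schwartz_mellin_differentiableAt (f : SchwartzMap ℝ ℂ) {s : ℂ} (hs : 0 < s.re) :
    DifferentiableAt ℂ (mellin f) s :=
  mellin_differentiableAt_of_isBigO_rpow (f.continuous.locallyIntegrable.locallyIntegrableOn _)
    (schwartz_isBigO_top f (-(s.re + 1))) (by linarith) (schwartz_isBigO_zero f) hs

/-- Integration by parts: `s` times the Mellin transform of `f` at `s` is minus that of the
derivative at `s + 1`. The boundary terms vanish because `Re s > 0`. -/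
lemma mul_mellin_eq (f : SchwartzMap ℝ ℂ) {s : ℂ} (hs : 0 < s.re) :
    s * mellin f s = - mellin (SchwartzMap.derivCLM ℂ ℂ f) (s + 1) := by
  have hs0 : s ≠ 0 := by rintro rfl; simp at hs
  set g := SchwartzMap.derivCLM ℂ ℂ f with hg
  have hc1 := schwartz_mellinConvergent f hs
  have hc2 := schwartz_mellinConvergent g (s := s + 1) (by simp; linarith)
  have key := integral_Ioi_mul_deriv_eq_deriv_mul (a := 0) (u := fun t : ℝ => (t:ℂ) ^ s)
    (u' := fun t : ℝ => s * (t:ℂ) ^ (s - 1)) (v := f) (v' := g) (a' := 0) (b' := 0)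
    (fun x hx => ?_) (fun x hx => f.hasDerivAt x) ?_ ?_ ?_ ?_
  · rw [sub_zero, zero_sub] at key
    have e1 : mellin g (s + 1) = ∫ t in Ioi (0:ℝ), (t:ℂ) ^ s * g t := by
      simp [mellin]
    have e2 : s * mellin f s = ∫ t in Ioi (0:ℝ), s * (t:ℂ) ^ (s - 1) * f t := by
      simp only [mellin, smul_eq_mul, ← integral_const_mul, mul_assoc]
    rw [e1, e2, key, neg_neg]
  · exact hasDerivAt_ofReal_cpow_const (ne_of_gt hx) hs0
  · simpa [MellinConvergent, Pi.mul_def] using! hc2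
  · have := hc1.const_mul s
    simpa [Pi.mul_def, mul_assoc] using! this
  · have h : ContinuousAt (fun t : ℝ => (t:ℂ) ^ s * f t) 0 :=
      (continuousAt_ofReal_cpow_const 0 s (Or.inl hs)).mul f.continuous.continuousAt
    have h2 := h.tendsto
    simp only [ofReal_zero, zero_cpow hs0, zero_mul] at h2
    exact h2.mono_left nhdsWithin_le_nhds
  · have h := schwartz_isBigO_top f (-(s.re + 1))
    have h1 : (fun t : ℝ => (t:ℂ) ^ s) =O[atTop] (fun t : ℝ => t ^ s.re) := by
      refine IsBigO.of_bound 1 ?_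
      filter_upwards [eventually_gt_atTop 0] with t ht
      rw [norm_cpow_eq_rpow_re_of_pos ht, one_mul]; exact Real.le_norm_self _
    refine (h1.mul h).trans_tendsto ((tendsto_rpow_neg_atTop one_pos).congr' ?_)
    filter_upwards [eventually_gt_atTop 0] with t ht
    rw [← Real.rpow_add ht]; congr 1; ring

/-- Rapid decay in vertical strips, by induction on `N`: each integration by parts gains a factor
`|s|` and moves the strip one unit to the right, where `|s| ≤ |s + 1|`. -/
lemma exists_mellin_decay (N : ℕ) (f : SchwartzMap ℝ ℂ) {a b : ℝ} (ha : 0 < a) (hab : a ≤ b) :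
    ∃ C : ℝ, 0 ≤ C ∧ ∀ s : ℂ, a ≤ s.re → s.re ≤ b → ‖s‖ ^ N * ‖mellin f s‖ ≤ C := by
  induction N generalizing f a b with
  | zero =>
    simpa using exists_mellin_bound
      (schwartz_mellinConvergent f (s := a) (by simpa using ha))
      (schwartz_mellinConvergent f (s := b) (by simpa using ha.trans_le hab))
  | succ N ih =>
    obtain ⟨C, hC, h⟩ := ih (SchwartzMap.derivCLM ℂ ℂ f) (a := a + 1) (b := b + 1)
      (by linarith) (by linarith)
    refine ⟨C, hC, fun s h1 h2 => ?_⟩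
    have hsle : ‖s‖ ≤ ‖s + 1‖ := by
      rw [← sq_le_sq₀ (norm_nonneg _) (norm_nonneg _), ← normSq_eq_norm_sq, ← normSq_eq_norm_sq,
        normSq_apply, normSq_apply]
      simp; nlinarith
    calc ‖s‖ ^ (N + 1) * ‖mellin f s‖ = ‖s‖ ^ N * ‖s * mellin f s‖ := by
          rw [norm_mul]; ring
      _ = ‖s‖ ^ N * ‖mellin (SchwartzMap.derivCLM ℂ ℂ f) (s + 1)‖ := by
          rw [mul_mellin_eq f (ha.trans_le h1), norm_neg]
      _ ≤ ‖s + 1‖ ^ N * ‖mellin (SchwartzMap.derivCLM ℂ ℂ f) (s + 1)‖ := by gcongr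
      _ ≤ C := h _ (by simp; linarith) (by simp; linarith)

lemma exists_zeta_mul_mellin_decay (N : ℕ) (f : SchwartzMap ℝ ℂ) :
    ∃ C : ℝ, 0 ≤ C ∧ ∀ s : ℂ, 1/4 ≤ s.re → s.re ≤ 3/4 →
      ‖s‖ ^ N * ‖riemannZeta s * mellin f s‖ ≤ C := by
  obtain ⟨C₁, hC₁, h₁⟩ := exists_zeta_bound
  obtain ⟨C₂, hC₂, h₂⟩ := exists_mellin_decay (N + 1) f (a := 1/4) (b := 3/4)
    (by norm_num) (by norm_num)
  refine ⟨C₁ * C₂, by positivity, fun s ha hb => ?_⟩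
  calc ‖s‖ ^ N * ‖riemannZeta s * mellin f s‖
      = ‖s‖ ^ N * (‖riemannZeta s‖ * ‖mellin f s‖) := by rw [norm_mul]
    _ ≤ ‖s‖ ^ N * ((C₁ * ‖s‖) * ‖mellin f s‖) := by gcongr; exact h₁ s ha hb
    _ = C₁ * (‖s‖ ^ (N + 1) * ‖mellin f s‖) := by ring
    _ ≤ C₁ * C₂ := by gcongr; exact h₂ s ha hb

/-! ### The holomorphic extension of `h(·, n)` -/

/-- The spectral parameter `1/2 - 2πin/w`, for complex `w`. -/
noncomputable def sPar (n : ℤ) (w : ℂ) : ℂ := 1/2 - 2 * (Real.pi : ℂ) * I * (n : ℂ) / w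

/-- The holomorphic extension of `L ↦ h(L, n)` to complex `w` near `(0, ∞)`. -/
noncomputable def hExt (f : SchwartzMap ℝ ℂ) (n : ℤ) (w : ℂ) : ℂ :=
  w ^ (-(1/2 : ℂ)) * riemannZeta (sPar n w) * mellin f (sPar n w)

/-- The open set of `w` in the right half plane with `|Im (2πn/w)| < 1/4`. -/
def domH (n : ℤ) : Set ℂ := {w | 0 < w.re ∧ 2 * Real.pi * |(n : ℝ) * w.im| < 1/4 * normSq w}

lemma isOpen_domH (n : ℤ) : IsOpen (domH n) := by
  rw [domH, ofPred_and]
  refine (isOpen_lt continuous_const continuous_re).inter (isOpen_lt ?_ ?_)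
  · exact continuous_const.mul ((continuous_const.mul continuous_im).abs)
  · exact continuous_const.mul continuous_normSq

lemma sPar_re (n : ℤ) (w : ℂ) : (sPar n w).re = 1/2 - 2 * Real.pi * (n * w.im) / normSq w := by
  unfold sPar
  rw [div_eq_mul_inv _ w]
  simp
  ring

lemma sPar_re_mem {n : ℤ} {w : ℂ} (hw : w ∈ domH n) :
    1/4 ≤ (sPar n w).re ∧ (sPar n w).re ≤ 3/4 := by
  have hpos : 0 < normSq w := normSq_pos.mpr (by rintro rfl; simpa using hw.1)
  have h : |2 * Real.pi * (n * w.im) / normSq w| ≤ 1/4 := by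
    rw [abs_div, abs_mul, abs_of_pos hpos, abs_of_pos Real.two_pi_pos, div_le_iff₀ hpos]
    exact hw.2.le
  rw [sPar_re]
  rw [abs_le] at h
  constructor <;> linarith [h.1, h.2]

lemma ofReal_mem_domH (n : ℤ) {L : ℝ} (hL : 0 < L) : (L : ℂ) ∈ domH n := by
  refine ⟨by simpa using hL, ?_⟩
  simp; positivity

lemma differentiableAt_hExt (f : SchwartzMap ℝ ℂ) {n : ℤ} {w : ℂ} (hw : w ∈ domH n) :
    DifferentiableAt ℂ (hExt f n) w := by
  have hw0 : w ≠ 0 := by rintro rfl; simpa using hw.1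
  have hs := sPar_re_mem hw
  have hd : DifferentiableAt ℂ (sPar n) w := by
    unfold sPar
    exact (differentiableAt_const _).sub ((differentiableAt_const _).div differentiableAt_id hw0)
  have h1 : DifferentiableAt ℂ (fun w : ℂ => w ^ (-(1/2 : ℂ))) w :=
    differentiableAt_id.cpow_const (Or.inl hw.1)
  have h2 : DifferentiableAt ℂ (fun w => riemannZeta (sPar n w)) w :=
    DifferentiableAt.comp w (differentiableAt_riemannZeta (by
      intro h; rw [h] at hs; norm_num at hs)) hd
  have h3 : DifferentiableAt ℂ (fun w => mellin f (sPar n w)) w :=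
    DifferentiableAt.comp (g := mellin f) w (schwartz_mellin_differentiableAt f (by linarith)) hd
  exact (h1.mul h2).mul h3

lemma analyticAt_hExt (f : SchwartzMap ℝ ℂ) {n : ℤ} {w : ℂ} (hw : w ∈ domH n) :
    AnalyticAt ℂ (hExt f n) w :=
  DifferentiableOn.analyticAt (s := domH n)
    (fun _ hz => (differentiableAt_hExt f hz).differentiableWithinAt) ((isOpen_domH n).mem_nhds hw)

/-- For a function holomorphic near `(0, ∞)`, real derivatives of its restriction agree with complex
derivatives. -/
lemma iteratedDeriv_comp_ofReal {H : ℂ → ℂ} (hH : ∀ L : ℝ, 0 < L → AnalyticAt ℂ H L) (m : ℕ) :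
    ∀ L : ℝ, 0 < L → iteratedDeriv m (fun x : ℝ => H x) L = iteratedDeriv m H L := by
  induction m with
  | zero => intro L _; simp
  | succ m ih =>
    intro L hL
    rw [iteratedDeriv_succ, iteratedDeriv_succ]
    have he : iteratedDeriv m (fun x : ℝ => H x) =ᶠ[𝓝 L] fun x : ℝ => iteratedDeriv m H x := by
      filter_upwards [Ioi_mem_nhds hL] with x hx using ih x hx
    rw [he.deriv_eq]
    have ha : AnalyticAt ℂ (iteratedDeriv m H) L := by
      rw [iteratedDeriv_eq_iterate]; exact (hH L hL).iterated_deriv m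
    exact ha.differentiableAt.hasDerivAt.comp_ofReal.deriv

lemma psi_eq_mellin (f : ℝ → ℂ) (z : ℂ) : psi f z = mellin f (1/2 - I * z) := by
  unfold psi mellin
  refine setIntegral_congr_fun measurableSet_Ioi fun u hu => ?_
  have hu0 : (u : ℂ) ≠ 0 := by exact_mod_cast (ne_of_gt hu)
  simp only [cpow_sub _ _ hu0, cpow_one, smul_eq_mul]
  ring

lemma hfun_eq_hExt (f : SchwartzMap ℝ ℂ) (n : ℤ) (L : ℝ) : hfun f L n = hExt f n L := by
  rw [hfun, hExt, psi_eq_mellin, sPar]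
  congr 3
  push_cast
  ring

/-- Points `w` with `|w - L| ≤ L²/(100|n|)` satisfy `|Im (2πn/w)| ≤ 2π|n| · |Im w| / |w|² < 1/4`, so
the Cauchy disc stays in the domain; there `|1/2 - 2πin/w|` is at least `|n|/L`. -/
lemma mem_domH_and_bounds {n : ℤ} (hn : n ≠ 0) {L : ℝ} (hL : 0 < L) (hL1 : L ≤ 1) {w : ℂ}
    (hw : ‖w - L‖ ≤ L ^ 2 / (100 * |(n : ℝ)|)) :
    w ∈ domH n ∧ |(n : ℝ)| / L ≤ ‖sPar n w‖ ∧
      ‖w ^ (-(1/2 : ℂ))‖ ≤ 2 * (|(n : ℝ)| / L) := by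
  have ha : (1:ℝ) ≤ |(n : ℝ)| := by exact_mod_cast Int.one_le_abs hn
  set a := |(n : ℝ)| with ha_def
  have ha0 : 0 < a := by linarith
  set r := L ^ 2 / (100 * a) with hr
  have hra : r * a = L ^ 2 / 100 := by rw [hr]; field_simp
  have hr0 : 0 < r := by positivity
  have hrL : r ≤ L / 100 := by
    have : r ≤ r * a := by nlinarith
    rw [hra] at this
    nlinarith
  have hre : |w.re - L| ≤ r := by
    have := (abs_re_le_norm (w - L)).trans hw
    simpa using this
  have him : |w.im| ≤ r := by
    have := (abs_im_le_norm (w - L)).trans hw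
    simpa using this
  have hre1 : 0.99 * L ≤ w.re := by have := (abs_le.mp hre).1; linarith
  have hwn : ‖w‖ ≤ 1.01 * L := by
    have h1 : ‖w‖ ≤ ‖w - L‖ + ‖(L : ℂ)‖ := by simpa using norm_add_le (w - L) (L : ℂ)
    rw [norm_real, Real.norm_of_nonneg hL.le] at h1
    linarith
  have hwn' : L / 2 ≤ ‖w‖ := by
    have := (le_abs_self _).trans (abs_re_le_norm w)
    linarith
  have hw0 : 0 < ‖w‖ := by linarith
  have hpi := Real.pi_gt_three
  have hpi' := Real.pi_lt_d2
  refine ⟨⟨by linarith, ?_⟩, ?_, ?_⟩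
  · rw [abs_mul, ← ha_def, normSq_apply]
    have h1 : a * |w.im| ≤ L ^ 2 / 100 := by rw [← hra, mul_comm r]; gcongr
    have h2 : (0.99 * L) ^ 2 ≤ w.re ^ 2 := by gcongr
    have h3 : 2 * Real.pi * (a * |w.im|) ≤ 6.3 * (L ^ 2 / 100) := by
      gcongr; linarith
    nlinarith [sq_nonneg w.im, sq_pos_of_pos hL]
  · have h1 : ‖2 * (Real.pi : ℂ) * I * (n : ℂ) / w‖ = 2 * Real.pi * a / ‖w‖ := by
      rw [norm_div, norm_mul, norm_mul, norm_mul, norm_I, norm_real, Complex.norm_intCast,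
        Real.norm_of_nonneg Real.pi_pos.le]
      simp [ha_def]
    have h2 : ‖2 * (Real.pi : ℂ) * I * (n : ℂ) / w‖ ≤ ‖sPar n w‖ + 1/2 := by
      have := norm_sub_le (1/2 : ℂ) (sPar n w)
      have e : (1/2 : ℂ) - sPar n w = 2 * (Real.pi : ℂ) * I * (n : ℂ) / w := by
        rw [sPar]; ring
      rw [e] at this
      have h3 : ‖(1/2 : ℂ)‖ = 1/2 := by norm_num
      rw [h3] at this
      linarith
    have h4 : 2 * (a / L) ≤ 2 * Real.pi * a / ‖w‖ := by
      rw [le_div_iff₀ hw0]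
      calc 2 * (a / L) * ‖w‖ ≤ 2 * (a / L) * (1.01 * L) := by gcongr
        _ = 2.02 * a := by field_simp; norm_num
        _ ≤ 2 * Real.pi * a := by gcongr; linarith
    have h5 : 1 ≤ a / L := by rw [le_div_iff₀ hL]; linarith
    linarith
  · have e : (-(1/2 : ℂ)) = ((-(1/2) : ℝ) : ℂ) := by push_cast; ring
    rw [e, norm_cpow_real]
    calc ‖w‖ ^ (-(1/2) : ℝ) ≤ (L / 2) ^ (-(1/2) : ℝ) :=
          Real.rpow_le_rpow_of_nonpos (by positivity) hwn' (by norm_num)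
      _ ≤ (L / 2) ^ (-1 : ℝ) :=
          Real.rpow_le_rpow_of_exponent_ge (by positivity) (by linarith) (by norm_num)
      _ = 2 * (1 / L) := by rw [Real.rpow_neg_one]; field_simp
      _ ≤ 2 * (a / L) := by gcongr

/-! ### Cauchy estimates -/

/-- Cauchy's estimate on the disc of radius `L²/(100|n|)`, applied with the decay exponent
`2m + 1 + (k + 1)` of `ζ · M f`: the part `2m` pays for the radius, and `1` for `w^{-1/2}`. -/
lemma exists_iteratedDeriv_bound (f : SchwartzMap ℝ ℂ) (m k : ℕ) :
    ∃ D : ℝ, 0 ≤ D ∧ ∀ n : ℤ, n ≠ 0 → ∀ L ∈ Ioc (0:ℝ) 1,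
      ‖iteratedDeriv m (fun L : ℝ => hfun f L n) L‖ ≤ D * (L / |(n : ℝ)|) ^ (k + 1) := by
  obtain ⟨C, hC, h⟩ := exists_zeta_mul_mellin_decay (2 * m + 1 + (k + 1)) f
  refine ⟨m.factorial * (2 * C) * 100 ^ m, by positivity, fun n hn L hL => ?_⟩
  have hL0 : 0 < L := hL.1
  have hL1 : L ≤ 1 := hL.2
  have ha : (1:ℝ) ≤ |(n : ℝ)| := by exact_mod_cast Int.one_le_abs hn
  simp_rw [hfun_eq_hExt]
  rw [iteratedDeriv_comp_ofReal (fun x hx => analyticAt_hExt f (ofReal_mem_domH n hx)) m L hL0]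
  have hB := fun w => mem_domH_and_bounds hn hL0 hL1 (w := w)
  set a := |(n : ℝ)| with ha_def
  have ha0 : 0 < a := by linarith
  set X := a / L with hX
  have hX0 : 0 < X := by positivity
  have hr0 : 0 < L ^ 2 / (100 * a) := by positivity
  have hdiff : DiffContOnCl ℂ (hExt f n) (Metric.ball (L : ℂ) (L ^ 2 / (100 * a))) := by
    refine DifferentiableOn.diffContOnCl fun w hw => ?_
    rw [closure_ball _ hr0.ne', mem_closedBall_iff_norm] at hw
    exact (differentiableAt_hExt f (hB w hw).1).differentiableWithinAt
  have hbd : ∀ w ∈ Metric.sphere (L : ℂ) (L ^ 2 / (100 * a)),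
      ‖hExt f n w‖ ≤ 2 * X * (C / X ^ (2 * m + 1 + (k + 1))) := by
    intro w hw
    obtain ⟨h1, h2, h3⟩ := hB w (mem_sphere_iff_norm.mp hw).le
    obtain ⟨h4, h5⟩ := sPar_re_mem h1
    rw [hExt, mul_assoc, norm_mul]
    gcongr
    rw [le_div_iff₀ (by positivity), mul_comm]
    refine le_trans ?_ (h _ h4 h5)
    gcongr
  have hmain := norm_iteratedDeriv_le_of_forall_mem_sphere_norm_le m hr0 hdiff hbd
  refine hmain.trans ?_
  have hinv : 1 / (L ^ 2 / (100 * a)) ≤ 100 * X ^ 2 := by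
    rw [hX, one_div_div, div_pow, mul_div_assoc]
    gcongr
    nlinarith
  have hLa : L / a = 1 / X := by rw [hX, one_div_div]
  calc m.factorial * (2 * X * (C / X ^ (2 * m + 1 + (k + 1)))) / (L ^ 2 / (100 * a)) ^ m
      = m.factorial * (2 * X * (C / X ^ (2 * m + 1 + (k + 1)))) *
          (1 / (L ^ 2 / (100 * a))) ^ m := by rw [one_div_pow, mul_one_div]
    _ ≤ m.factorial * (2 * X * (C / X ^ (2 * m + 1 + (k + 1)))) * (100 * X ^ 2) ^ m := by
        gcongr
    _ = m.factorial * (2 * C) * 100 ^ m * (L / a) ^ (k + 1) := by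
        rw [hLa, one_div_pow, mul_pow, ← pow_mul, pow_add X (2 * m + 1), pow_succ X (2 * m)]
        field_simp

end

theorem stmt18 (f : SchwartzMap ℝ ℂ) (hev : ∀ x : ℝ, f (-x) = f x)
    (h0 : f 0 = 0) (hint : ∫ x : ℝ, f x = 0) :
    (∀ n : ℤ, n ≠ 0 → ContDiffOn ℝ (⊤ : ℕ∞) (fun L : ℝ => hfun (⇑f) L n) (Ioi 0)) ∧
    (∀ m k : ℕ, ∃ C : ℝ, 0 < C ∧ ∀ L ∈ Ioc (0:ℝ) 1,
      (Summable fun n : {n : ℤ // n ≠ 0} =>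
        ‖iteratedDeriv m (fun L : ℝ => hfun (⇑f) L (n : ℤ)) L‖ ^ 2) ∧
      ∑' n : {n : ℤ // n ≠ 0},
        ‖iteratedDeriv m (fun L : ℝ => hfun (⇑f) L (n : ℤ)) L‖ ^ 2 ≤ C * L ^ k) := by
  refine ⟨fun n _ L hL => ?_, fun m k => ?_⟩
  · simp_rw [hfun_eq_hExt]
    have h1 : ContDiffAt ℝ (⊤ : ℕ∞) (hExt f n) (L : ℂ) :=
      (analyticAt_hExt f (ofReal_mem_domH n hL)).contDiffAt.restrict_scalars ℝ
    exact (h1.comp L Complex.ofRealCLM.contDiff.contDiffAt).contDiffWithinAt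
  · obtain ⟨D, hD, h⟩ := exists_iteratedDeriv_bound f m k
    have hS : Summable fun n : {n : ℤ // n ≠ 0} => 1 / ((n : ℤ) : ℝ) ^ 2 :=
      (Real.summable_one_div_int_pow.mpr one_lt_two).subtype _
    have hS0 : 0 ≤ ∑' n : {n : ℤ // n ≠ 0}, 1 / ((n : ℤ) : ℝ) ^ 2 :=
      tsum_nonneg fun n => by positivity
    refine ⟨D ^ 2 * (∑' n : {n : ℤ // n ≠ 0}, 1 / ((n : ℤ) : ℝ) ^ 2) + 1, by positivity,
      fun L hL => ?_⟩
    have hL0 : 0 < L := hL.1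
    have hb : ∀ n : {n : ℤ // n ≠ 0},
        ‖iteratedDeriv m (fun L : ℝ => hfun f L (n : ℤ)) L‖ ^ 2 ≤
          D ^ 2 * L ^ k * (1 / ((n : ℤ) : ℝ) ^ 2) := by
      intro n
      have ha : (1:ℝ) ≤ |((n : ℤ) : ℝ)| := by exact_mod_cast Int.one_le_abs n.2
      calc _ ≤ (D * (L / |((n : ℤ) : ℝ)|) ^ (k + 1)) ^ 2 := by gcongr; exact h n n.2 L hL
        _ = D ^ 2 * L ^ (2 * (k + 1)) * (1 / |((n : ℤ) : ℝ)| ^ (2 * (k + 1))) := by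
            rw [div_pow]; ring
        _ ≤ D ^ 2 * L ^ k * (1 / |((n : ℤ) : ℝ)| ^ 2) := by
            gcongr ?_ * ?_ * (1 / ?_)
            · exact pow_le_pow_of_le_one hL0.le hL.2 (by omega)
            · exact pow_le_pow_right₀ ha (by omega)
        _ = _ := by rw [sq_abs]
    have hS' := hS.mul_left (D ^ 2 * L ^ k)
    have hsum := Summable.of_nonneg_of_le (fun n => by positivity) hb hS'
    refine ⟨hsum, (hsum.tsum_le_tsum hb hS').trans ?_⟩
    rw [tsum_mul_left]
    have : 0 < L ^ k := by positivity
    nlinarith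
end
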